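/- arXiv:1908.05882 — 4 statements merged into one kernel-verified Lean document; each statement's English description precedes it below -/
import Mathlib

section
/- Poisson bracket for the quadratic Carleman weight. Let n ≥ 2, σ ∈ {+1,−1}, c ∈ ℝ, and φ(x) = σ·x_n + Σ_{j=1}^{n−1} x_j² − σ·c² on ℝⁿ. Then for all x ∈ ℝⁿ and ξ ∈ ℝⁿ, the Poisson bracket of the associated symbols satisfies {a,b}(x,ξ) = 32 Σ_{j=1}^{n−1} (ξ_j² + 4x_j²)³; in particular {a,b}(x,ξ) ≥ 0 everywhere (so the hypothesis '{a,b} ≥ 0 on the set a = b = 0' holds for this weight). -/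
open MeasureTheory Real Set

noncomputable section

def pd {n : ℕ} (j : Fin n) (u : EuclideanSpace ℝ (Fin n) → ℂ) :
    EuclideanSpace ℝ (Fin n) → ℂ :=
  fun x => fderiv ℝ u x (EuclideanSpace.single j 1)

def pdR {n : ℕ} (j : Fin n) (φ : EuclideanSpace ℝ (Fin n) → ℝ) :
    EuclideanSpace ℝ (Fin n) → ℝ :=
  fun x => fderiv ℝ φ x (EuclideanSpace.single j 1)

def opL {n : ℕ} (A : EuclideanSpace ℝ (Fin n) → Fin n → ℂ)
    (q : EuclideanSpace ℝ (Fin n) → ℂ) (u : EuclideanSpace ℝ (Fin n) → ℂ) :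
    EuclideanSpace ℝ (Fin n) → ℂ :=
  fun x => (∑ j : Fin n, (pd j)^[4] u x)
    - Complex.I * (∑ j : Fin n, A x j * pd j u x) + q x * u x

def IsCcInfty {n : ℕ} (Ω : Set (EuclideanSpace ℝ (Fin n)))
    (w : EuclideanSpace ℝ (Fin n) → ℂ) : Prop :=
  ContDiff ℝ (⊤ : ℕ∞) w ∧ HasCompactSupport w ∧ tsupport w ⊆ Ω

def l2sq {n : ℕ} (Ω : Set (EuclideanSpace ℝ (Fin n)))
    (f : EuclideanSpace ℝ (Fin n) → ℂ) : ℝ :=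
  ∫ x in Ω, ‖f x‖ ^ 2

def l2norm {n : ℕ} (Ω : Set (EuclideanSpace ℝ (Fin n)))
    (f : EuclideanSpace ℝ (Fin n) → ℂ) : ℝ :=
  Real.sqrt (l2sq Ω f)

def gradsq {n : ℕ} (Ω : Set (EuclideanSpace ℝ (Fin n)))
    (w : EuclideanSpace ℝ (Fin n) → ℂ) : ℝ :=
  ∫ x in Ω, ∑ j : Fin n, ‖pd j w x‖ ^ 2

def BddLipOn {n : ℕ} (Ω : Set (EuclideanSpace ℝ (Fin n)))
    (A : EuclideanSpace ℝ (Fin n) → Fin n → ℂ) : Prop :=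
  (∃ M, ∀ x ∈ Ω, ‖A x‖ ≤ M) ∧ ∃ K, LipschitzOnWith K A Ω

def BddMeasOn {n : ℕ} (Ω : Set (EuclideanSpace ℝ (Fin n)))
    (q : EuclideanSpace ℝ (Fin n) → ℂ) : Prop :=
  Measurable q ∧ ∃ M, ∀ x ∈ Ω, ‖q x‖ ≤ M

def derivsL2 {n : ℕ} (Ω : Set (EuclideanSpace ℝ (Fin n)))
    (u : EuclideanSpace ℝ (Fin n) → ℂ) : Prop :=
  ∀ js : List (Fin n), js.length ≤ 4 →
    IntegrableOn (fun x => ‖(js.foldr pd u) x‖ ^ 2) Ω volume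

def symA {n : ℕ} (φ : EuclideanSpace ℝ (Fin n) → ℝ)
    (x ξ : EuclideanSpace ℝ (Fin n)) : ℝ :=
  ∑ j : Fin n, ((ξ j) ^ 4 - 6 * (pdR j φ x) ^ 2 * (ξ j) ^ 2 + (pdR j φ x) ^ 4)

def symB {n : ℕ} (φ : EuclideanSpace ℝ (Fin n) → ℝ)
    (x ξ : EuclideanSpace ℝ (Fin n)) : ℝ :=
  ∑ j : Fin n, (4 * pdR j φ x * (ξ j) ^ 3 - 4 * (pdR j φ x) ^ 3 * ξ j)

def poisson {n : ℕ} (φ : EuclideanSpace ℝ (Fin n) → ℝ)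
    (x ξ : EuclideanSpace ℝ (Fin n)) : ℝ :=
  ∑ k : Fin n,
    (fderiv ℝ (fun ξ' => symA φ x ξ') ξ (EuclideanSpace.single k 1) *
       fderiv ℝ (fun y => symB φ y ξ) x (EuclideanSpace.single k 1) -
     fderiv ℝ (fun y => symA φ y ξ) x (EuclideanSpace.single k 1) *
       fderiv ℝ (fun ξ' => symB φ x ξ') ξ (EuclideanSpace.single k 1))


lemma fderiv_sum_coord {n : ℕ} (F : Fin n → ℝ → ℝ) (F' : Fin n → ℝ)
    (x : EuclideanSpace ℝ (Fin n)) (k : Fin n)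
    (h : ∀ j, HasDerivAt (F j) (F' j) (x j)) :
    fderiv ℝ (fun y : EuclideanSpace ℝ (Fin n) => ∑ j, F j (y j)) x
      (EuclideanSpace.single k 1) = F' k := by
  have h1 : HasFDerivAt (fun y : EuclideanSpace ℝ (Fin n) => ∑ j, F j (y j))
      (∑ j, F' j • (EuclideanSpace.proj j : EuclideanSpace ℝ (Fin n) →L[ℝ] ℝ)) x := by
    apply HasFDerivAt.fun_sum
    intro j _
    exact (h j).comp_hasFDerivAt x
      (EuclideanSpace.proj j : EuclideanSpace ℝ (Fin n) →L[ℝ] ℝ).hasFDerivAt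
  rw [h1.fderiv]
  simp

/-- Poisson bracket for the quadratic Carleman weight. -/
theorem poisson_bracket_quadratic_weight
    (n : ℕ) (hn : 2 ≤ n) (σ c : ℝ) (hσ : σ = 1 ∨ σ = -1)
    (φ : EuclideanSpace ℝ (Fin n) → ℝ)
    (hφ : φ = fun x => σ * x ⟨n - 1, by omega⟩ +
      (∑ j ∈ Finset.univ.erase (⟨n - 1, by omega⟩ : Fin n), (x j) ^ 2) - σ * c ^ 2) :
    ∀ x ξ : EuclideanSpace ℝ (Fin n),
      poisson φ x ξ =
        32 * ∑ j ∈ Finset.univ.erase (⟨n - 1, by omega⟩ : Fin n),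
          ((ξ j) ^ 2 + 4 * (x j) ^ 2) ^ 3 ∧
      0 ≤ poisson φ x ξ := by
  intro x ξ
  set l : Fin n := ⟨n - 1, by omega⟩ with hl
  have hp : ∀ (j : Fin n) (y : EuclideanSpace ℝ (Fin n)),
      pdR j φ y = if j = l then σ else 2 * y j := by
    intro j y
    have e : φ = fun x => (∑ j, (fun (j : Fin n) (t : ℝ) =>
        if j = l then σ * t - σ * c ^ 2 else t ^ 2) j (x j)) := by
      rw [hφ]
      funext z
      rw [← Finset.add_sum_erase _ _ (Finset.mem_univ l)]
      have : ∑ j ∈ Finset.univ.erase l, (if j = l then σ * z j - σ * c ^ 2 else (z j) ^ 2)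
          = ∑ j ∈ Finset.univ.erase l, (z j) ^ 2 := by
        apply Finset.sum_congr rfl
        intro j hj
        rw [if_neg (Finset.ne_of_mem_erase hj)]
      simp only [this, if_true]
      ring
    unfold pdR
    rw [e]
    refine fderiv_sum_coord (fun (j : Fin n) (t : ℝ) =>
        if j = l then σ * t - σ * c ^ 2 else t ^ 2) (fun j => if j = l then σ else 2 * y j) y j ?_
    intro j
    by_cases hj : j = l
    · simp only [hj, if_true]
      simpa using ((hasDerivAt_id (y l)).const_mul σ).sub_const (σ * c ^ 2)
    · simp only [hj, if_false]
      simpa using (hasDerivAt_id' (y j)).fun_pow 2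
  -- derivative of the momentum-like function
  have hg : ∀ (j : Fin n) (t : ℝ), HasDerivAt (fun t : ℝ => if j = l then σ else 2 * t)
      (if j = l then 0 else 2) t := by
    intro j t
    by_cases hj : j = l
    · simp only [hj, if_true]
      exact hasDerivAt_const _ _
    · simp only [hj, if_false]
      simpa using (hasDerivAt_id t).const_mul 2
  have key : poisson φ x ξ =
      32 * ∑ j ∈ Finset.univ.erase l, ((ξ j) ^ 2 + 4 * (x j) ^ 2) ^ 3 := by
    unfold poisson symA symB
    simp only [hp]
    rw [Finset.mul_sum]
    rw [← Finset.add_sum_erase _ _ (Finset.mem_univ l)]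
    have D : ∀ k : Fin n, _ := fun k => And.intro
      (fderiv_sum_coord (fun j t => t ^ 4 - 6 * (if j = l then σ else 2 * x j) ^ 2 * t ^ 2
          + (if j = l then σ else 2 * x j) ^ 4) _ ξ k
        (fun j => (((hasDerivAt_id' (ξ j)).fun_pow 4).fun_sub
          (((hasDerivAt_id' (ξ j)).fun_pow 2).const_mul _)).add_const _)) <| And.intro
      (fderiv_sum_coord (fun j t => 4 * (if j = l then σ else 2 * t) * (ξ j) ^ 3
          - 4 * (if j = l then σ else 2 * t) ^ 3 * ξ j) _ x k
        (fun j => (((hg j (x j)).const_mul 4).mul_const _).fun_sub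
          ((((hg j (x j)).fun_pow 3).const_mul 4).mul_const _))) <| And.intro
      (fderiv_sum_coord (fun j t => (ξ j) ^ 4 - 6 * (if j = l then σ else 2 * t) ^ 2 * (ξ j) ^ 2
          + (if j = l then σ else 2 * t) ^ 4) _ x k
        (fun j => (((((hg j (x j)).fun_pow 2).const_mul 6).mul_const _).const_sub _).fun_add
          ((hg j (x j)).fun_pow 4)))
      (fderiv_sum_coord (fun j t => 4 * (if j = l then σ else 2 * x j) * t ^ 3
          - 4 * (if j = l then σ else 2 * x j) ^ 3 * t) _ ξ k
        (fun j => (((hasDerivAt_id' (ξ j)).fun_pow 3).const_mul _).fun_sub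
          ((hasDerivAt_id' (ξ j)).const_mul _)))
    simp only [(D _).1, (D _).2.1, (D _).2.2.1, (D _).2.2.2]
    rw [show ∀ a b d : ℝ, (a + b = d) = (a + b = 0 + d) from fun a b d => by rw [zero_add]]
    congr 1
    · simp
    · apply Finset.sum_congr rfl
      intro j hj
      simp only [if_neg (Finset.ne_of_mem_erase hj)]
      norm_num
      ring
  refine ⟨key, ?_⟩
  rw [key]
  positivity
end
end

section
/- Poisson bracket under convexification of the weight (identity (2.9) of the paper). Let n ≥ 1, let φ : ℝⁿ → ℝ and f : ℝ → ℝ be smooth, set ψ := f∘φ, and let a_ψ, b_ψ be the symbols associated with the weight ψ. Fix x ∈ ℝⁿ and ξ ∈ ℝⁿ with a(x,ξ) = 0 and b(x,ξ) = 0, and set η := f'(φ(x))·ξ. Then {a_ψ, b_ψ}(x,η) = 64·(Σ_{j=1}^n ξ_j(∂_{x_j}φ(x))³)² · f'(φ(x))⁶ f''(φ(x)) + 4·(Σ_{j=1}^n ξ_j⁴ − Σ_{j=1}^n (∂_{x_j}φ(x))⁴)² · f'(φ(x))⁶ f''(φ(x)) + f'(φ(x))⁷ · {a,b}(x,ξ).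 -/
open MeasureTheory Real Set

noncomputable section

def cA (p t : ℝ) : ℝ := 4 * t ^ 3 - 12 * p ^ 2 * t
def cB (p t : ℝ) : ℝ := 12 * p * t ^ 2 - 4 * p ^ 3

lemma coord_hasFDerivAt {n : ℕ} (j : Fin n) (ξ : EuclideanSpace ℝ (Fin n)) :
    HasFDerivAt (fun ξ' : EuclideanSpace ℝ (Fin n) => ξ' j)
      (EuclideanSpace.proj j : EuclideanSpace ℝ (Fin n) →L[ℝ] ℝ) ξ :=
  (EuclideanSpace.proj j : EuclideanSpace ℝ (Fin n) →L[ℝ] ℝ).hasFDerivAt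

lemma hasF_A {E : Type*} [NormedAddCommGroup E] [NormedSpace ℝ E] {n : ℕ}
    (p t : Fin n → E → ℝ) (p' t' : Fin n → E →L[ℝ] ℝ) (x : E)
    (hp : ∀ j, HasFDerivAt (p j) (p' j) x) (ht : ∀ j, HasFDerivAt (t j) (t' j) x) (v : E) :
    fderiv ℝ (fun y => ∑ j, ((t j y) ^ 4 - 6 * (p j y) ^ 2 * (t j y) ^ 2 + (p j y) ^ 4)) x v
      = ∑ j, (cA (p j x) (t j x) * t' j v - cB (p j x) (t j x) * p' j v) := by
  have h := HasFDerivAt.fun_sum (u := Finset.univ) (fun j _ =>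
    (((ht j).pow 4).sub ((((hp j).pow 2).const_mul 6).mul ((ht j).pow 2))).add ((hp j).pow 4))
  have h2 := congrArg (fun L : E →L[ℝ] ℝ => L v) h.fderiv
  refine Eq.trans h2 ?_
  simp only [ContinuousLinearMap.sum_apply]
  refine Finset.sum_congr rfl fun j _ => ?_
  simp [cA, cB]
  ring

lemma hasF_B {E : Type*} [NormedAddCommGroup E] [NormedSpace ℝ E] {n : ℕ}
    (p t : Fin n → E → ℝ) (p' t' : Fin n → E →L[ℝ] ℝ) (x : E)
    (hp : ∀ j, HasFDerivAt (p j) (p' j) x) (ht : ∀ j, HasFDerivAt (t j) (t' j) x) (v : E) :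
    fderiv ℝ (fun y => ∑ j, (4 * p j y * (t j y) ^ 3 - 4 * (p j y) ^ 3 * t j y)) x v
      = ∑ j, (cB (p j x) (t j x) * t' j v + cA (p j x) (t j x) * p' j v) := by
  have h := HasFDerivAt.fun_sum (u := Finset.univ) (fun j _ =>
    (((hp j).const_mul 4).mul ((ht j).pow 3)).sub ((((hp j).pow 3).const_mul 4).mul (ht j)))
  have h2 := congrArg (fun L : E →L[ℝ] ℝ => L v) h.fderiv
  refine Eq.trans h2 ?_
  simp only [ContinuousLinearMap.sum_apply]
  refine Finset.sum_congr rfl fun j _ => ?_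
  simp [cA, cB]
  ring

lemma poisson_eq {n : ℕ} (φ : EuclideanSpace ℝ (Fin n) → ℝ) (x ξ : EuclideanSpace ℝ (Fin n))
    (H : Fin n → EuclideanSpace ℝ (Fin n) →L[ℝ] ℝ)
    (hp : ∀ j, HasFDerivAt (pdR j φ) (H j) x) :
    poisson φ x ξ = ∑ k, ∑ j, H j (EuclideanSpace.single k 1) *
      (cA (pdR k φ x) (ξ k) * cA (pdR j φ x) (ξ j)
        + cB (pdR k φ x) (ξ k) * cB (pdR j φ x) (ξ j)) := by
  unfold poisson symA symB
  refine Finset.sum_congr rfl fun k _ => ?_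
  rw [hasF_A (fun j _ => pdR j φ x) (fun j ξ' => ξ' j) (fun _ => 0)
      (fun j => EuclideanSpace.proj j) ξ (fun j => hasFDerivAt_const _ _)
      (fun j => coord_hasFDerivAt j ξ),
    hasF_B (fun j _ => pdR j φ x) (fun j ξ' => ξ' j) (fun _ => 0)
      (fun j => EuclideanSpace.proj j) ξ (fun j => hasFDerivAt_const _ _)
      (fun j => coord_hasFDerivAt j ξ),
    hasF_A (fun j => pdR j φ) (fun j _ => ξ j) H (fun _ => 0) x hp
      (fun j => hasFDerivAt_const _ _),
    hasF_B (fun j => pdR j φ) (fun j _ => ξ j) H (fun _ => 0) x hp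
      (fun j => hasFDerivAt_const _ _)]
  have hproj : ∀ j : Fin n, (EuclideanSpace.proj j : EuclideanSpace ℝ (Fin n) →L[ℝ] ℝ)
      (EuclideanSpace.single k 1) = if j = k then 1 else 0 := fun j => by
    simp [Pi.single_apply]
  simp only [ContinuousLinearMap.zero_apply, mul_zero, sub_zero, zero_sub, add_zero, zero_add,
    hproj, mul_ite, mul_one,
    Finset.sum_ite_eq', Finset.sum_ite_eq, Finset.mem_univ, if_true]
  rw [Finset.mul_sum, Finset.sum_mul, ← Finset.sum_sub_distrib]
  refine Finset.sum_congr rfl fun j _ => ?_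
  ring

/-- identity (2.9): Poisson bracket under convexification of the weight. -/
theorem poisson_bracket_convexification
    (n : ℕ) (hn : 1 ≤ n)
    (φ : EuclideanSpace ℝ (Fin n) → ℝ) (hφ : ContDiff ℝ (⊤ : ℕ∞) φ)
    (f : ℝ → ℝ) (hf : ContDiff ℝ (⊤ : ℕ∞) f)
    (x ξ : EuclideanSpace ℝ (Fin n))
    (ha : symA φ x ξ = 0) (hb : symB φ x ξ = 0) :
    poisson (fun y => f (φ y)) x (deriv f (φ x) • ξ) =
      64 * (∑ j : Fin n, ξ j * (pdR j φ x) ^ 3) ^ 2 *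
          (deriv f (φ x)) ^ 6 * deriv (deriv f) (φ x)
        + 4 * ((∑ j : Fin n, (ξ j) ^ 4) - ∑ j : Fin n, (pdR j φ x) ^ 4) ^ 2 *
          (deriv f (φ x)) ^ 6 * deriv (deriv f) (φ x)
        + (deriv f (φ x)) ^ 7 * poisson φ x ξ := by
  have hφd : Differentiable ℝ φ := hφ.differentiable (by simp)
  have hfd : Differentiable ℝ f := hf.differentiable (by simp)
  have hf' : Differentiable ℝ (deriv f) :=
    ((contDiff_infty_iff_deriv.1 hf).2).differentiable (by simp)
  have hφ' : Differentiable ℝ (fderiv ℝ φ) :=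
    (hφ.fderiv_right (m := 1) (by norm_cast)).differentiable (by simp)
  have hp : ∀ j, HasFDerivAt (pdR j φ) (fderiv ℝ (pdR j φ) x) x := fun j =>
    ((hφ' x).clm_apply (differentiableAt_const _)).hasFDerivAt
  have hpψ : ∀ j, pdR j (fun y => f (φ y)) = fun y => deriv f (φ y) * pdR j φ y := by
    intro j
    funext y
    have h := ((hfd (φ y)).hasDerivAt.comp_hasFDerivAt y (hφd y).hasFDerivAt).fderiv
    have h2 := congrArg (fun L : EuclideanSpace ℝ (Fin n) →L[ℝ] ℝ =>
      L (EuclideanSpace.single j 1)) h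
    refine Eq.trans h2 ?_
    simp [pdR]
  have hg : HasFDerivAt (fun y => deriv f (φ y)) (deriv (deriv f) (φ x) • fderiv ℝ φ x) x :=
    (hf' (φ x)).hasDerivAt.comp_hasFDerivAt x (hφd x).hasFDerivAt
  have hp2 : ∀ j, HasFDerivAt (pdR j (fun y => f (φ y)))
      (deriv f (φ x) • fderiv ℝ (pdR j φ) x
        + pdR j φ x • (deriv (deriv f) (φ x) • fderiv ℝ φ x)) x := by
    intro j
    rw [hpψ j]
    exact hg.mul (hp j)
  rw [poisson_eq _ x _ _ hp2, poisson_eq φ x ξ _ hp]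
  simp only [hpψ]
  have hpk : ∀ k, fderiv ℝ φ x (EuclideanSpace.single k 1) = pdR k φ x := fun k => rfl
  simp only [ContinuousLinearMap.add_apply, ContinuousLinearMap.smul_apply, smul_eq_mul, hpk,
    PiLp.smul_apply]
  have e1 : ∑ k, pdR k φ x * cA (pdR k φ x) (ξ k) = -8 * ∑ j, ξ j * (pdR j φ x) ^ 3 := by
    rw [← sub_eq_zero, ← hb, Finset.mul_sum, symB, ← Finset.sum_sub_distrib]
    refine Finset.sum_congr rfl fun j _ => ?_
    simp only [cA]
    ring
  have e2 : ∑ k, pdR k φ x * cB (pdR k φ x) (ξ k)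
      = 2 * ((∑ j, (ξ j) ^ 4) - ∑ j, (pdR j φ x) ^ 4) := by
    have h : ∑ k, pdR k φ x * cB (pdR k φ x) (ξ k)
      = 2 * ((∑ j, (ξ j) ^ 4) - ∑ j, (pdR j φ x) ^ 4) - 2 * symA φ x ξ := by
      rw [symA, ← Finset.sum_sub_distrib, Finset.mul_sum, Finset.mul_sum,
        ← Finset.sum_sub_distrib]
      refine Finset.sum_congr rfl fun j _ => ?_
      simp only [cB]
      ring
    rw [h, ha]
    ring
  have e3 : 64 * (∑ j, ξ j * (pdR j φ x) ^ 3) ^ 2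
      = ∑ k, ∑ j, (pdR k φ x * cA (pdR k φ x) (ξ k)) * (pdR j φ x * cA (pdR j φ x) (ξ j)) := by
    rw [← Finset.sum_mul_sum, e1]
    ring
  have e4 : 4 * ((∑ j, (ξ j) ^ 4) - ∑ j, (pdR j φ x) ^ 4) ^ 2
      = ∑ k, ∑ j, (pdR k φ x * cB (pdR k φ x) (ξ k)) * (pdR j φ x * cB (pdR j φ x) (ξ j)) := by
    rw [← Finset.sum_mul_sum, e2]
    ring
  rw [e3, e4]
  simp only [Finset.mul_sum, Finset.sum_mul, ← Finset.sum_add_distrib]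
  refine Finset.sum_congr rfl fun k _ => Finset.sum_congr rfl fun j _ => ?_
  simp only [cA, cB]
  ring
end
end

section
/- Lower bound for the real part of the conjugated operator (estimate (2.11) of the paper). Let n ≥ 1, let Ω ⊂ ℝⁿ be a bounded open set, and let ϱ ∈ ℝⁿ be a nonzero vector. For h > 0 and w smooth with compact support in Ω, define 𝒜w := Σ_{j=1}^n (h⁴ ∂_{x_j}⁴w + 6h²ϱ_j² ∂_{x_j}²w + ϱ_j⁴ w). Then there exists a constant C > 0, depending only on Ω, ϱ and n, such that for all h ∈ (0,1) and all w ∈ C_c^∞(Ω): h²·(‖w‖²_{L²(Ω)} + h²‖∇w‖²_{L²(Ω)}) ≤ C·(‖𝒜w‖²_{L²(Ω)} + h²‖∇w‖²_{L²(Ω)}). -/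
open MeasureTheory Real Set

noncomputable section

lemma poincare_aux {n : ℕ} (Ω : Set (EuclideanSpace ℝ (Fin n))) (R : ℝ)
    (hR : ∀ x ∈ Ω, ‖x‖ ≤ R) (j : Fin n)
    (w : EuclideanSpace ℝ (Fin n) → ℂ) (hw : IsCcInfty Ω w) :
    l2sq Ω w ≤ 4 * R ^ 2 * gradsq Ω w := by
  obtain ⟨hs, hc, hsub⟩ := hw
  have hw0 : ∀ x, x ∉ Ω → w x = 0 := fun x hx => image_eq_zero_of_notMem_tsupport (fun h => hx (hsub h))
  have hdc : ∀ i, Continuous (pd i w) := fun i =>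
    (hs.continuous_fderiv (by simp)).clm_apply continuous_const
  have hdcs : ∀ i, HasCompactSupport (pd i w) := fun i => hc.fderiv_apply ℝ _
  have hd0 : ∀ i x, x ∉ Ω → pd i w x = 0 := by
    intro i x hx
    have : x ∉ tsupport (fderiv ℝ w) := fun h => hx (hsub (tsupport_fderiv_subset ℝ h))
    simp [pd, image_eq_zero_of_notMem_tsupport this]
  have hsq : ∀ f : EuclideanSpace ℝ (Fin n) → ℂ, Continuous f → HasCompactSupport f →
      Integrable (fun x => ‖f x‖ ^ 2) := by
    intro f h1 h2
    refine (h1.norm.pow 2).integrable_of_hasCompactSupport ?_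
    refine h2.mono' (fun x hx => subset_tsupport _ ?_)
    intro h
    apply hx
    simp [h]
  have hdw : ∀ x, HasFDerivAt w (fderiv ℝ w x) x := fun x =>
    (hs.differentiable (by simp) x).hasFDerivAt
  have hdsq : ∀ x, fderiv ℝ (fun y => ‖w y‖ ^ 2) x (EuclideanSpace.single j 1)
      = 2 * inner ℝ (w x) (pd j w x) := by
    intro x
    rw [(hdw x).norm_sq.fderiv]
    simp [pd]
    ring
  let p : EuclideanSpace ℝ (Fin n) →L[ℝ] ℝ := EuclideanSpace.proj j
  have hp : ∀ x, fderiv ℝ (fun y => p y) x (EuclideanSpace.single j 1) = 1 := by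
    intro x
    rw [p.hasFDerivAt.fderiv]
    simp [p]
  have hwc := hs.continuous
  have hcin : Continuous fun x => (inner ℝ (w x) (pd j w x) : ℝ) := hwc.inner (hdc j)
  have hI2 : Integrable (fun x => p x * fderiv ℝ (fun y => ‖w y‖ ^ 2) x (EuclideanSpace.single j 1)) := by
    simp_rw [hdsq]
    refine Continuous.integrable_of_hasCompactSupport (by fun_prop) ?_
    refine hc.mono' (fun x hx => subset_tsupport _ ?_)
    intro h
    apply hx
    simp [h]
  have hI3 : Integrable (fun x => p x * ‖w x‖ ^ 2) := by
    refine Continuous.integrable_of_hasCompactSupport (by fun_prop) ?_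
    refine hc.mono' (fun x hx => subset_tsupport _ ?_)
    intro h
    apply hx
    simp [h]
  have key := integral_mul_fderiv_eq_neg_fderiv_mul_of_integrable (μ := volume)
    (f := fun y => p y) (g := fun y => ‖w y‖ ^ 2) (v := EuclideanSpace.single j 1)
    (by simpa only [hp, one_mul] using hsq w hwc hc) hI2 hI3 (fun x _ => p.differentiableAt)
    (fun x _ => (hdw x).norm_sq.differentiableAt)
  simp only [hp, one_mul] at key
  have hmono : -∫ x, p x * fderiv ℝ (fun y => ‖w y‖ ^ 2) x (EuclideanSpace.single j 1)
      ≤ ∫ x, (1 / 2 * ‖w x‖ ^ 2 + 2 * R ^ 2 * ‖pd j w x‖ ^ 2) := by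
    rw [← integral_neg]
    refine integral_mono hI2.neg (((hsq w hwc hc).const_mul _).add
      ((hsq _ (hdc j) (hdcs j)).const_mul _)) ?_
    intro x
    simp only [hdsq]
    by_cases hx : x ∈ Ω
    · have h1 : |p x| ≤ R := (PiLp.norm_apply_le x j).trans (hR x hx)
      have h2 := abs_real_inner_le_norm (w x) (pd j w x)
      have h3 : -(p x * (2 * inner ℝ (w x) (pd j w x))) ≤ 2 * (R * (‖w x‖ * ‖pd j w x‖)) := by
        have := mul_le_mul h1 h2 (abs_nonneg _) ((abs_nonneg _).trans h1)
        rw [← abs_mul] at this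
        have := (neg_le_abs _).trans this
        linarith
      nlinarith [sq_nonneg (‖w x‖ - 2 * R * ‖pd j w x‖)]
    · simp [hw0 x hx, hd0 j x hx]
  rw [integral_add ((hsq w hwc hc).const_mul _) ((hsq _ (hdc j) (hdcs j)).const_mul _),
    integral_const_mul, integral_const_mul] at hmono
  have hg : ∫ x, ‖pd j w x‖ ^ 2 ≤ ∫ x, ∑ i, ‖pd i w x‖ ^ 2 := by
    refine integral_mono (hsq _ (hdc j) (hdcs j))
      (integrable_finsetSum _ fun i _ => hsq _ (hdc i) (hdcs i)) ?_
    intro x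
    exact Finset.single_le_sum (f := fun i => ‖pd i w x‖ ^ 2) (fun i _ => sq_nonneg _)
      (Finset.mem_univ j)
  have e1 : l2sq Ω w = ∫ x, ‖w x‖ ^ 2 :=
    setIntegral_eq_integral_of_forall_compl_eq_zero (fun x hx => by simp [hw0 x hx])
  have e2 : gradsq Ω w = ∫ x, ∑ i, ‖pd i w x‖ ^ 2 :=
    setIntegral_eq_integral_of_forall_compl_eq_zero (fun x hx => by simp [hd0 _ x hx])
  rw [e1, e2]
  nlinarith [mul_le_mul_of_nonneg_left hg (sq_nonneg R)]

/-- estimate (2.11): lower bound for the real part of the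
conjugated operator. -/
theorem lower_bound_real_part
    (n : ℕ) (hn : 1 ≤ n)
    (Ω : Set (EuclideanSpace ℝ (Fin n))) (hΩopen : IsOpen Ω)
    (hΩbdd : Bornology.IsBounded Ω)
    (ϱ : Fin n → ℝ) (hϱ : ϱ ≠ 0) :
    ∃ C > (0 : ℝ), ∀ h : ℝ, 0 < h → h < 1 →
      ∀ w : EuclideanSpace ℝ (Fin n) → ℂ, IsCcInfty Ω w →
        h ^ 2 * (l2sq Ω w + h ^ 2 * gradsq Ω w) ≤
          C * (l2sq Ω (fun x => ∑ j : Fin n,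
              ((h : ℂ) ^ 4 * (pd j)^[4] w x + 6 * (h : ℂ) ^ 2 * (ϱ j : ℂ) ^ 2 * (pd j)^[2] w x
                + (ϱ j : ℂ) ^ 4 * w x)) + h ^ 2 * gradsq Ω w) := by
  obtain ⟨R, hR⟩ := hΩbdd.exists_norm_le
  refine ⟨4 * R ^ 2 + 1, by positivity, ?_⟩
  intro h h0 h1 w hw
  have hP := poincare_aux Ω R hR ⟨0, hn⟩ w hw
  have hG : 0 ≤ gradsq Ω w := integral_nonneg fun x => Finset.sum_nonneg fun i _ => sq_nonneg _
  have hA : 0 ≤ l2sq Ω (fun x => ∑ j : Fin n,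
              ((h : ℂ) ^ 4 * (pd j)^[4] w x + 6 * (h : ℂ) ^ 2 * (ϱ j : ℂ) ^ 2 * (pd j)^[2] w x
                + (ϱ j : ℂ) ^ 4 * w x)) := integral_nonneg fun x => sq_nonneg _
  have hC : (0 : ℝ) ≤ 4 * R ^ 2 + 1 := by positivity
  have hh : h ^ 2 ≤ 1 := by nlinarith
  have h3 := mul_le_mul_of_nonneg_right hh hG
  rw [mul_add]
  have h4 := mul_nonneg hC hA
  have h5 : h ^ 2 * (l2sq Ω w + h ^ 2 * gradsq Ω w) ≤ h ^ 2 * ((4 * R ^ 2 + 1) * gradsq Ω w) :=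
    mul_le_mul_of_nonneg_left (by linarith) (sq_nonneg h)
  linarith
end
end

section
/- Semiclassical H¹ Carleman estimate for the principal part with linear weight (estimate (1.2) of the paper). Let n ≥ 2, let Ω ⊂ ℝⁿ be a bounded open set, and let ϱ ∈ ℝⁿ be a nonzero vector. Then there exist C > 0 and h₀ ∈ (0,1) such that for all h ∈ (0,h₀) and all w ∈ C_c^∞(Ω): ‖e^{ϱ·x/h} h⁴ Σ_{j=1}^n ∂_{x_j}⁴(e^{−ϱ·x/h} w)‖_{L²(Ω)} ≥ C·h·(‖w‖²_{L²(Ω)} + h²‖∇w‖²_{L²(Ω)})^{1/2}. -/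
open MeasureTheory Real Set

noncomputable section

section Abs
variable {V : Type*} [SeminormedAddCommGroup V] [InnerProductSpace ℝ V]

lemma abs_comm_pow (a x : Module.End ℝ V) (h : ℝ) (hc : a * x = x * a + h • 1) (k : ℕ) :
    a ^ (k + 1) * x = x * a ^ (k + 1) + ((k + 1 : ℝ) * h) • a ^ k := by
  induction k with
  | zero => simp [hc]
  | succ k ih =>
    rw [pow_succ', mul_assoc, ih, mul_add, ← mul_assoc, hc, add_mul, mul_assoc, ← pow_succ',
      mul_smul_comm, ← pow_succ', smul_mul_assoc, one_mul, add_assoc, ← add_smul]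
    congr 2
    push_cast; ring

/-- formal adjoint pair -/
def AdjP (P Q : Module.End ℝ V) : Prop := ∀ u v, inner ℝ (P u) v = inner ℝ u (Q v)

lemma AdjP.symm {P Q : Module.End ℝ V} (h : AdjP P Q) : AdjP Q P := fun u v => by
  rw [real_inner_comm, ← h, real_inner_comm]

lemma AdjP.mul {P Q R S : Module.End ℝ V} (h : AdjP P Q) (h' : AdjP R S) :
    AdjP (P * R) (S * Q) := fun u v => by
  simp only [Module.End.mul_apply]; rw [h, h']

lemma AdjP.pow {P Q : Module.End ℝ V} (h : AdjP P Q) (k : ℕ) : AdjP (P ^ k) (Q ^ k) := by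
  induction k with
  | zero => intro u v; simp
  | succ k ih => rw [pow_succ, pow_succ']; exact ih.mul h

lemma AdjP.sum {ι : Type*} (s : Finset ι) {P Q : ι → Module.End ℝ V}
    (h : ∀ i, AdjP (P i) (Q i)) : AdjP (∑ i ∈ s, P i) (∑ i ∈ s, Q i) := fun u v => by
  simp only [LinearMap.sum_apply, sum_inner, inner_sum]
  exact Finset.sum_congr rfl fun i _ => h i u v

lemma AdjP.norm_eq {P Q : Module.End ℝ V} (h : AdjP P Q) (hc : Commute P Q) (u : V) :
    ‖P u‖ = ‖Q u‖ := by
  have : ‖P u‖ ^ 2 = ‖Q u‖ ^ 2 := by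
    rw [← real_inner_self_eq_norm_sq, ← real_inner_self_eq_norm_sq, h, h.symm,
      ← Module.End.mul_apply, ← Module.End.mul_apply, hc.eq]
  exact (sq_eq_sq₀ (norm_nonneg _) (norm_nonneg _)).1 this

lemma abs_interp (d : Module.End ℝ V) (hd : AdjP d (-d)) (w : V) :
    ‖d w‖ ^ 2 ≤ ‖w‖ ^ 2 + ‖(d ^ 3) w‖ ^ 2 := by
  have key : ∀ v : V, ‖d v‖ ^ 2 ≤ ‖v‖ * ‖d (d v)‖ := fun v => by
    rw [← real_inner_self_eq_norm_sq, hd]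
    simpa using real_inner_le_norm v (-(d (d v)))
  have h1 := key w
  have h2 := key (d w)
  have e : (d ^ 3) w = d (d (d w)) := rfl
  rw [e]
  set a := ‖w‖
  set b := ‖d w‖
  set c := ‖d (d w)‖
  set f := ‖d (d (d w))‖
  have ha : 0 ≤ a := norm_nonneg _
  have hb : 0 ≤ b := norm_nonneg _
  have hc : 0 ≤ c := norm_nonneg _
  have hf : 0 ≤ f := norm_nonneg _
  nlinarith [sq_nonneg (a - c), sq_nonneg (b - f), sq_nonneg (a+c), sq_nonneg b, sq_nonneg c]

lemma abs_main {n : ℕ} (D X : Fin n → Module.End ℝ V) (A : ℝ) (hA : 0 < A)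
    (hD : ∀ j, AdjP (D j) (-(D j)))
    (hDD : ∀ j k, Commute (D j) (D k))
    (hDX : ∀ j, D j * X j = X j * D j + 1)
    (hDX' : ∀ j k, k ≠ j → Commute (D k) (X j))
    (hXA : ∀ j u, ‖X j u‖ ≤ A * ‖u‖)
    (ϱ : Fin n → ℝ) (h : ℝ) (hh : 0 < h) (j : Fin n) (w : V) :
    h * ‖((h • D j - ϱ j • (1 : Module.End ℝ V)) ^ 3) w‖ ≤ 2 * A * ‖(∑ k, (h • D k - ϱ k • (1 : Module.End ℝ V)) ^ 4) w‖ := by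
  set T : Fin n → Module.End ℝ V := fun k => h • D k - ϱ k • 1 with hT
  set S : Fin n → Module.End ℝ V := fun k => (-h) • D k - ϱ k • 1 with hS
  have hTS : ∀ k, AdjP (T k) (S k) := fun k u v => by
    have := hD k u v
    simp only [LinearMap.neg_apply, inner_neg_right] at this
    simp [hT, hS, inner_sub_left, inner_sub_right, inner_smul_left, inner_smul_right, this]
  have cl : ∀ (a b r s : ℝ) (j k), Commute (a • D j - r • 1) (b • D k - s • 1) := by
    intro a b r s j k
    refine Commute.sub_left (Commute.sub_right ?_ ?_) ?_
    · exact ((hDD j k).smul_left a).smul_right b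
    · exact (Commute.one_right _).smul_right s
    · exact (Commute.one_left _).smul_left r
  have cTT : ∀ j k, Commute (T j) (T k) := fun j k => cl _ _ _ _ j k
  have cTS : ∀ j k, Commute (T j) (S k) := fun j k => cl _ _ _ _ j k
  have hTX : T j * X j = X j * T j + h • 1 := by
    simp only [hT, sub_mul, mul_sub, smul_mul_assoc, mul_smul_comm, hDX, smul_add, one_mul, mul_one]
    abel
  have hSX : S j * X j = X j * S j + (-h) • 1 := by
    simp only [hS, sub_mul, mul_sub, smul_mul_assoc, mul_smul_comm, hDX, smul_add, one_mul, mul_one]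
    abel
  have hTX' : ∀ k, k ≠ j → Commute (T k) (X j) := fun k hk =>
    Commute.sub_left ((hDX' j k hk).smul_left h) ((Commute.one_left _).smul_left _)
  set P := ∑ k, T k ^ 4 with hP
  set Q := ∑ k, S k ^ 4 with hQ
  have hPQ : AdjP P Q := AdjP.sum _ fun k => (hTS k).pow 4
  have cPQ : Commute P Q := Commute.sum_left _ _ _ fun i _ => Commute.sum_right _ _ _ fun k _ =>
    (cTS i k).pow_pow 4 4
  have hPX : P * X j = X j * P + (4 * h) • T j ^ 3 := by
    rw [hP, Finset.sum_mul, Finset.mul_sum, ← Finset.add_sum_erase _ _ (Finset.mem_univ j),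
      ← Finset.add_sum_erase Finset.univ (fun k => X j * T k ^ 4) (Finset.mem_univ j),
      abs_comm_pow _ _ _ hTX 3]
    rw [Finset.sum_congr rfl fun k hk => ((hTX' k (Finset.ne_of_mem_erase hk)).pow_left 4).eq]
    norm_num
    abel
  have hS3 := abs_comm_pow _ _ _ hSX 2
  have nP : ‖Q w‖ = ‖P w‖ := (hPQ.norm_eq cPQ w).symm
  have n3 : ‖(S j ^ 3) w‖ = ‖(T j ^ 3) w‖ :=
    (((hTS j).pow 3).norm_eq ((cTS j j).pow_pow 3 3) w).symm
  have n2 : ‖(S j ^ 2) w‖ = ‖(T j ^ 2) w‖ :=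
    (((hTS j).pow 2).norm_eq ((cTS j j).pow_pow 2 2) w).symm
  -- Poincare
  have poi : ∀ v : V, h * ‖v‖ ≤ 2 * A * ‖T j v‖ := by
    intro v
    have e1 : (h * ‖v‖) * ‖v‖ = inner ℝ (X j v) (S j v) - inner ℝ (X j (T j v)) v := by
      have := congrArg (fun L : Module.End ℝ V => inner ℝ (L v) v) hTX
      simp only [Module.End.mul_apply, LinearMap.add_apply, inner_add_left, LinearMap.smul_apply,
        Module.End.one_apply, inner_smul_left, real_inner_self_eq_norm_sq] at this
      rw [hTS j] at this
      simp at this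
      linarith [this]
    have nv : ‖S j v‖ = ‖T j v‖ := ((hTS j).norm_eq (cTS j j) v).symm
    have i1 := real_inner_le_norm (X j v) (S j v)
    have i2 := abs_le.1 (abs_real_inner_le_norm (X j (T j v)) v)
    have m1 := mul_le_mul_of_nonneg_right (hXA j v) (norm_nonneg (S j v))
    have m2 := mul_le_mul_of_nonneg_right (hXA j (T j v)) (norm_nonneg v)
    rcases eq_or_lt_of_le (norm_nonneg v) with h0 | h0
    · rw [← h0]; simp; positivity
    · refine le_of_mul_le_mul_right ?_ h0
      rw [nv] at *
      nlinarith
  have pT : h * ‖(T j ^ 2) w‖ ≤ 2 * A * ‖(T j ^ 3) w‖ := poi ((T j ^ 2) w)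
  have cQT : Commute Q (T j ^ 3) := Commute.sum_left _ _ _ fun i _ =>
    ((cTS j i).symm).pow_pow 4 3
  have e1 : (4 * h * ‖(T j ^ 3) w‖) * ‖(T j ^ 3) w‖ =
      inner ℝ (X j ((S j ^ 3) w)) (Q w) - 3 * h * inner ℝ ((S j ^ 2) w) (Q w)
        - inner ℝ (X j (P w)) ((T j ^ 3) w) := by
    have a1 := congrArg (fun L : Module.End ℝ V => inner ℝ (L w) ((T j ^ 3) w)) hPX
    simp only [Module.End.mul_apply, LinearMap.add_apply, inner_add_left, LinearMap.smul_apply,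
        inner_smul_left, real_inner_self_eq_norm_sq] at a1
    rw [hPQ, ← Module.End.mul_apply, cQT.eq, Module.End.mul_apply, ← ((hTS j).pow 3).symm,
      ← Module.End.mul_apply, hS3] at a1
    simp only [Module.End.mul_apply, LinearMap.add_apply, inner_add_left, LinearMap.smul_apply,
        inner_smul_left, real_inner_self_eq_norm_sq] at a1
    simp at a1
    linarith [a1]
  have i1 := real_inner_le_norm (X j ((S j ^ 3) w)) (Q w)
  have i2 := abs_le.1 (abs_real_inner_le_norm ((S j ^ 2) w) (Q w))
  have i3 := abs_le.1 (abs_real_inner_le_norm (X j (P w)) ((T j ^ 3) w))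
  have m1 := mul_le_mul_of_nonneg_right (hXA j ((S j ^ 3) w)) (norm_nonneg (Q w))
  have m3 := mul_le_mul_of_nonneg_right (hXA j (P w)) (norm_nonneg ((T j ^ 3) w))
  have m2 := mul_le_mul_of_nonneg_right pT (norm_nonneg (P w))
  change h * ‖(T j ^ 3) w‖ ≤ 2 * A * ‖P w‖
  rw [nP] at *
  rw [n3] at *
  rw [n2] at *
  have m4 := mul_le_mul_of_nonneg_left i2.1 (by positivity : 0 ≤ 3 * h)
  rcases eq_or_lt_of_le (norm_nonneg ((T j ^ 3) w)) with h0 | h0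
  · rw [← h0]; simp; positivity
  · refine le_of_mul_le_mul_right ?_ h0
    nlinarith

lemma abs_low (d : Module.End ℝ V) (hd : AdjP d (-d)) (r : ℝ) (v : V) :
    ‖(d - r • 1) v‖ ^ 2 = ‖d v‖ ^ 2 + r ^ 2 * ‖v‖ ^ 2 := by
  have h0 : inner ℝ (d v) v = (0 : ℝ) := by
    have := hd v v
    simp only [LinearMap.neg_apply, inner_neg_right] at this
    rw [real_inner_comm v (d v)] at this
    rw [real_inner_comm] ; linarith
  have : (d - r • 1) v = d v - r • v := rfl
  rw [this, norm_sub_sq_real, inner_smul_right, h0, norm_smul, mul_pow]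
  simp

lemma abs_final {n : ℕ} (D X : Fin n → Module.End ℝ V) (A : ℝ) (hA : 0 < A)
    (hD : ∀ j, AdjP (D j) (-(D j)))
    (hDD : ∀ j k, Commute (D j) (D k))
    (hDX : ∀ j, D j * X j = X j * D j + 1)
    (hDX' : ∀ j k, k ≠ j → Commute (D k) (X j))
    (hXA : ∀ j u, ‖X j u‖ ≤ A * ‖u‖)
    (ϱ : Fin n → ℝ) (hϱ : ϱ ≠ 0) :
    ∃ C > (0 : ℝ), ∀ (h : ℝ), 0 < h → ∀ w : V,
    C * h * Real.sqrt (‖w‖ ^ 2 + h ^ 2 * ∑ j, ‖D j w‖ ^ 2) ≤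
      ‖(∑ k, (h • D k - ϱ k • (1 : Module.End ℝ V)) ^ 4) w‖ := by
  obtain ⟨j0, hj0⟩ := Function.ne_iff.1 hϱ
  simp only [Pi.zero_apply] at hj0
  set r := (ϱ j0) ^ 2 with hr
  have hr0 : 0 < r := by positivity
  set K : ℝ := (((n : ℝ) + 1) / r ^ 3 + n) * (4 * A ^ 2) with hK
  have hK0 : 0 < K := by positivity
  refine ⟨(Real.sqrt K)⁻¹, by positivity, fun h hh w => ?_⟩
  have hd : ∀ j, AdjP (h • D j) (-(h • D j)) := fun j u v => by
    have := hD j u v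
    simp only [LinearMap.neg_apply, inner_neg_right] at this
    simp [inner_smul_left, inner_smul_right, this]
  have M := fun j => abs_main D X A hA hD hDD hDX hDX' hXA ϱ h hh j w
  set N := ‖(∑ k, (h • D k - ϱ k • (1 : Module.End ℝ V)) ^ 4) w‖ with hN
  have M2 : ∀ j, h ^ 2 * ‖((h • D j - ϱ j • (1 : Module.End ℝ V)) ^ 3) w‖ ^ 2 ≤ 4 * A ^ 2 * N ^ 2 := fun j => by
    have := pow_le_pow_left₀ (by positivity) (M j) 2
    nlinarith
  have cube : ∀ j (v : V), ((h • D j - ϱ j • (1 : Module.End ℝ V)) ^ 3) v =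
    (h • D j - ϱ j • (1 : Module.End ℝ V)) ((h • D j - ϱ j • (1 : Module.End ℝ V)) ((h • D j - ϱ j • (1 : Module.End ℝ V)) v)) := fun j v => rfl
  have low : r ^ 3 * ‖w‖ ^ 2 ≤ ‖((h • D j0 - ϱ j0 • (1 : Module.End ℝ V)) ^ 3) w‖ ^ 2 := by
    have key : ∀ v : V, r * ‖v‖ ^ 2 ≤ ‖(h • D j0 - ϱ j0 • (1 : Module.End ℝ V)) v‖ ^ 2 := fun v => by
      rw [abs_low _ (hd j0)]; nlinarith [sq_nonneg ‖(h • D j0) v‖]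
    rw [cube]
    calc r ^ 3 * ‖w‖ ^ 2 = r * (r * (r * ‖w‖ ^ 2)) := by ring
      _ ≤ _ := (mul_le_mul_of_nonneg_left ((mul_le_mul_of_nonneg_left (key _) hr0.le).trans
        (key _)) hr0.le).trans (key _)
  have high : ∀ j, ‖((h • D j) ^ 3) w‖ ^ 2 ≤ ‖((h • D j - ϱ j • (1 : Module.End ℝ V)) ^ 3) w‖ ^ 2 := by
    intro j
    have key : ∀ v : V, ‖(h • D j) v‖ ^ 2 ≤ ‖(h • D j - ϱ j • (1 : Module.End ℝ V)) v‖ ^ 2 := fun v => by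
      rw [abs_low _ (hd j)]; nlinarith [mul_nonneg (sq_nonneg (ϱ j)) (sq_nonneg ‖v‖)]
    have cc : Commute (h • D j) (h • D j - ϱ j • (1 : Module.End ℝ V)) :=
      (Commute.refl _).sub_right ((Commute.one_right _).smul_right _)
    have cv : ∀ v, (h • D j) ((h • D j - ϱ j • (1 : Module.End ℝ V)) v) = (h • D j - ϱ j • (1 : Module.End ℝ V)) ((h • D j) v) :=
      fun v => congrArg (fun L : Module.End ℝ V => L v) cc.eq
    rw [cube]
    calc ‖((h • D j) ^ 3) w‖ ^ 2 = ‖(h • D j) ((h • D j) ((h • D j) w))‖ ^ 2 := rfl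
      _ ≤ _ := key _
      _ = ‖(h • D j) ((h • D j) ((h • D j - ϱ j • (1 : Module.End ℝ V)) w))‖ ^ 2 := by simp only [cv]
      _ ≤ _ := key _
      _ = ‖(h • D j) ((h • D j - ϱ j • (1 : Module.End ℝ V)) ((h • D j - ϱ j • (1 : Module.End ℝ V)) w))‖ ^ 2 := by simp only [cv]
      _ ≤ _ := key _
  have sumb : ∀ j, h ^ 2 * (h ^ 2 * ‖D j w‖ ^ 2) ≤ h ^ 2 * ‖w‖ ^ 2 + 4 * A ^ 2 * N ^ 2 := by
    intro j
    have := (abs_interp _ (hd j) w).trans (add_le_add_right (high j) _)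
    have e : ‖(h • D j) w‖ ^ 2 = h ^ 2 * ‖D j w‖ ^ 2 := by
      rw [LinearMap.smul_apply, norm_smul, mul_pow]; simp
    rw [e] at this
    have := mul_le_mul_of_nonneg_left this (sq_nonneg h)
    linarith [M2 j]
  have wb : h ^ 2 * ‖w‖ ^ 2 ≤ 4 * A ^ 2 * N ^ 2 / r ^ 3 := by
    rw [le_div_iff₀ (by positivity)]
    have := mul_le_mul_of_nonneg_left low (sq_nonneg h)
    linarith [M2 j0]
  have tot : h ^ 2 * (‖w‖ ^ 2 + h ^ 2 * ∑ j, ‖D j w‖ ^ 2) ≤ K * N ^ 2 := by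
    have s := Finset.sum_le_sum (s := Finset.univ) fun j _ => sumb j
    rw [← Finset.mul_sum, ← Finset.mul_sum] at s
    simp only [Finset.sum_const, Finset.card_univ, Fintype.card_fin, nsmul_eq_mul] at s
    have : K * N ^ 2 = (n + 1) * (4 * A ^ 2 * N ^ 2 / r ^ 3) + n * (4 * A ^ 2 * N ^ 2) := by
      rw [hK]; field_simp
    rw [this]
    nlinarith [mul_le_mul_of_nonneg_left wb (by positivity : (0 : ℝ) ≤ n + 1)]
  rw [mul_assoc, inv_mul_le_iff₀ (by positivity)]
  refine abs_le_of_sq_le_sq' ?_ (by positivity) |>.2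
  rw [mul_pow, mul_pow, Real.sq_sqrt (by positivity), Real.sq_sqrt hK0.le]
  exact tot
end Abs

section Conc
variable {n : ℕ}

lemma two_le_inf : (2 : WithTop ℕ∞) ≤ ((⊤ : ℕ∞) : WithTop ℕ∞) :=
  WithTop.coe_le_coe.2 (le_top : (2 : ℕ∞) ≤ ⊤)

lemma cc_pd {Ω : Set (EuclideanSpace ℝ (Fin n))} {w : EuclideanSpace ℝ (Fin n) → ℂ}
    (hw : IsCcInfty Ω w) (j : Fin n) : IsCcInfty Ω (pd j w) := by
  refine ⟨?_, hw.2.1.fderiv_apply (𝕜 := ℝ) _, (tsupport_fderiv_apply_subset ℝ _).trans hw.2.2⟩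
  exact (hw.1.fderiv_right (m := ((⊤ : ℕ∞) : WithTop ℕ∞)) (by simp)).clm_apply contDiff_const

lemma cc_mul {Ω : Set (EuclideanSpace ℝ (Fin n))} {w : EuclideanSpace ℝ (Fin n) → ℂ}
    (hw : IsCcInfty Ω w) (g : EuclideanSpace ℝ (Fin n) → ℂ) (hg : ContDiff ℝ (⊤ : ℕ∞) g) :
    IsCcInfty Ω (fun x => g x * w x) := by
  refine ⟨hg.mul hw.1, hw.2.1.mul_left, ?_⟩
  exact (tsupport_mul_subset_right (f := g) (g := w)).trans hw.2.2

def VV (Ω : Set (EuclideanSpace ℝ (Fin n))) : Submodule ℝ (EuclideanSpace ℝ (Fin n) → ℂ) where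
  carrier := {w | IsCcInfty Ω w}
  add_mem' {a b} ha hb := by
    refine ⟨ha.1.add hb.1, ha.2.1.add hb.2.1, ?_⟩
    exact (tsupport_add a b).trans (union_subset ha.2.2 hb.2.2)
  zero_mem' := by
    refine ⟨contDiff_const, HasCompactSupport.zero, ?_⟩
    simp [tsupport]
  smul_mem' c a ha := cc_mul ha (fun _ => (c : ℂ)) contDiff_const

lemma cont_coord (j : Fin n) : ContDiff ℝ (⊤ : ℕ∞) (fun x : EuclideanSpace ℝ (Fin n) => ((x j : ℝ) : ℂ)) :=
  Complex.ofRealCLM.contDiff.comp (EuclideanSpace.proj (𝕜 := ℝ) j).contDiff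

variable {Ω : Set (EuclideanSpace ℝ (Fin n))}

lemma vv_diff (f : VV Ω) : Differentiable ℝ (f : EuclideanSpace ℝ (Fin n) → ℂ) :=
  f.2.1.differentiable (by simp)

lemma vv_int (f g : VV Ω) : Integrable (fun x => inner ℝ (f.1 x) (g.1 x)) := by
  refine Continuous.integrable_of_hasCompactSupport
    (f.2.1.continuous.inner g.2.1.continuous) ?_
  refine f.2.2.1.mono' ?_
  intro x hx
  apply subset_tsupport
  intro h0
  apply hx
  simp only [h0, inner_zero_left]

def vvD (j : Fin n) : Module.End ℝ (VV Ω) where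
  toFun f := ⟨pd j f.1, cc_pd f.2 j⟩
  map_add' f g := by
    ext x
    simp only [pd, Submodule.coe_add, Pi.add_apply]
    rw [fderiv_add (vv_diff f x) (vv_diff g x)]; rfl
  map_smul' c f := by
    ext x
    simp only [pd, Submodule.coe_smul, Pi.smul_apply, RingHom.id_apply]
    rw [fderiv_const_smul (vv_diff f x)]; rfl

def vvX (j : Fin n) : Module.End ℝ (VV Ω) where
  toFun f := ⟨fun x => ((x j : ℝ) : ℂ) * f.1 x, cc_mul f.2 _ (cont_coord j)⟩
  map_add' f g := by
    ext x
    simp [mul_add]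
  map_smul' c f := by
    ext x
    simp [mul_left_comm]

@[reducible]
def vvCore : PreInnerProductSpace.Core ℝ (VV Ω) where
  inner f g := ∫ x, inner ℝ (f.1 x) (g.1 x)
  conj_inner_symm f g := by
    simp only [conj_trivial]
    exact integral_congr_ae (Filter.Eventually.of_forall fun x => real_inner_comm _ _)
  re_inner_nonneg f := integral_nonneg fun x => real_inner_self_nonneg
  add_left f g k := by
    rw [← integral_add (vv_int f k) (vv_int g k)]
    exact integral_congr_ae (Filter.Eventually.of_forall fun x => inner_add_left _ _ _)
  smul_left f g c := by
    simp only [conj_trivial]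
    rw [← integral_const_mul]
    exact integral_congr_ae (Filter.Eventually.of_forall fun x => real_inner_smul_left _ _ _)

instance vvSN : SeminormedAddCommGroup (VV Ω) :=
  @InnerProductSpace.Core.toSeminormedAddCommGroup ℝ (VV Ω) _ _ _ vvCore

instance vvIP : InnerProductSpace ℝ (VV Ω) := InnerProductSpace.ofCore vvCore

lemma vv_inner (f g : VV Ω) : inner ℝ f g = ∫ x, inner ℝ (f.1 x) (g.1 x) := rfl

lemma vv_norm (f : VV Ω) : ‖f‖ ^ 2 = ∫ x, ‖f.1 x‖ ^ 2 := by
  rw [← real_inner_self_eq_norm_sq, vv_inner]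
  simp only [real_inner_self_eq_norm_sq]

lemma vv_out (f : VV Ω) {x} (hx : x ∉ Ω) : f.1 x = 0 :=
  image_eq_zero_of_notMem_tsupport fun h => hx (f.2.2.2 h)

lemma vv_l2sq (f : VV Ω) : l2sq Ω f.1 = ‖f‖ ^ 2 := by
  rw [vv_norm, l2sq]
  exact setIntegral_eq_integral_of_forall_compl_eq_zero fun x hx => by simp [vv_out f hx]

lemma vv_sqint (f : VV Ω) : Integrable (fun x => ‖f.1 x‖ ^ 2) := by
  simpa only [real_inner_self_eq_norm_sq] using vv_int f f

lemma vv_gradsq (f : VV Ω) : gradsq Ω f.1 = ∑ j, ‖vvD j f‖ ^ 2 := by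
  rw [gradsq, integral_finsetSum]
  · exact Finset.sum_congr rfl fun j _ => vv_l2sq (vvD j f)
  · exact fun j _ => (vv_sqint (vvD j f)).integrableOn

lemma vv_adj (j : Fin n) : AdjP (vvD (Ω := Ω) j) (-(vvD j)) := fun u v => by
  rw [LinearMap.neg_apply, inner_neg_right, vv_inner, vv_inner]
  have := integral_bilinear_fderiv_right_eq_neg_left_of_integrable (μ := volume)
    (f := u.1) (g := v.1) (v := EuclideanSpace.single j (1 : ℝ)) (B := innerSL ℝ (E := ℂ))
    (vv_int (vvD j u) v) (vv_int u (vvD j v)) (vv_int u v)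
    (fun x _ => vv_diff u x) (fun x _ => vv_diff v x)
  have e : ∫ x, inner ℝ (u.1 x) ((vvD j v).1 x) = -∫ x, inner ℝ ((vvD j u).1 x) (v.1 x) := this
  rw [e, neg_neg]

lemma vv_DD (j k : Fin n) : Commute (vvD (Ω := Ω) j) (vvD k) := by
  ext f x
  change fderiv ℝ (fun y => fderiv ℝ f.1 y (EuclideanSpace.single k 1)) x (EuclideanSpace.single j 1)
    = fderiv ℝ (fun y => fderiv ℝ f.1 y (EuclideanSpace.single j 1)) x (EuclideanSpace.single k 1)
  have hd : DifferentiableAt ℝ (fderiv ℝ f.1) x :=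
    (f.2.1.fderiv_right (m := 1) (by rw [one_add_one_eq_two]; exact two_le_inf)).differentiable (by simp) x
  have hs : IsSymmSndFDerivAt ℝ f.1 x :=
    f.2.1.contDiffAt.isSymmSndFDerivAt (by simpa using two_le_inf)
  rw [fderiv_clm_apply hd (differentiableAt_const _), fderiv_clm_apply hd (differentiableAt_const _)]
  simpa using hs.eq _ _

lemma pd_coord (j k : Fin n) (f : VV Ω) (x : EuclideanSpace ℝ (Fin n)) :
    (vvD k (vvX j f)).1 x = (x j : ℂ) * (vvD k f).1 x + (if j = k then 1 else 0) * f.1 x := by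
  change fderiv ℝ (fun y : EuclideanSpace ℝ (Fin n) => ((y j : ℝ) : ℂ) * f.1 y) x
    (EuclideanSpace.single k 1) = (x j : ℂ) * fderiv ℝ f.1 x (EuclideanSpace.single k 1) + _
  have h1 : HasFDerivAt (fun y : EuclideanSpace ℝ (Fin n) => ((y j : ℝ) : ℂ))
      (Complex.ofRealCLM.comp (EuclideanSpace.proj (𝕜 := ℝ) j)) x :=
    (Complex.ofRealCLM.comp (EuclideanSpace.proj (𝕜 := ℝ) j)).hasFDerivAt
  have h2 : HasFDerivAt (fun y : EuclideanSpace ℝ (Fin n) => ((y j : ℝ) : ℂ) * f.1 y) _ x :=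
    h1.mul (vv_diff f x).hasFDerivAt
  rw [h2.fderiv]
  by_cases hjk : j = k <;> simp [hjk, mul_comm]

lemma vv_DX (j : Fin n) : vvD (Ω := Ω) j * vvX j = vvX j * vvD j + 1 := by
  ext f x
  have := pd_coord j j f x
  simp only [if_true, one_mul] at this
  exact this

lemma vv_DX' (j k : Fin n) (h : k ≠ j) : Commute (vvD (Ω := Ω) k) (vvX j) := by
  ext f x
  have := pd_coord j k f x
  simp only [h.symm, if_false, zero_mul, add_zero] at this
  exact this

lemma vv_XA {A : ℝ} (hA : 0 < A) (hΩ : ∀ x ∈ Ω, ‖x‖ ≤ A) (j : Fin n) (u : VV Ω) :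
    ‖vvX j u‖ ≤ A * ‖u‖ := by
  refine (abs_le_of_sq_le_sq' ?_ (by positivity)).2
  rw [mul_pow, vv_norm, vv_norm, ← integral_const_mul]
  refine integral_mono (vv_sqint _) ((vv_sqint _).const_mul _) fun x => ?_
  change ‖((x j : ℝ) : ℂ) * u.1 x‖ ^ 2 ≤ A ^ 2 * ‖u.1 x‖ ^ 2
  by_cases hx : x ∈ Ω
  · rw [norm_mul, mul_pow]
    gcongr
    rw [Complex.norm_real]
    exact (PiLp.norm_apply_le x j).trans (hΩ x hx)
  · simp [vv_out u hx]

def eW (ϱ : Fin n → ℝ) (h : ℝ) (x : EuclideanSpace ℝ (Fin n)) : ℂ :=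
  (Real.exp (-(∑ j : Fin n, ϱ j * x j) / h) : ℂ)

lemma eW_pd (ϱ : Fin n → ℝ) (h : ℝ) (hh : h ≠ 0) (k : Fin n) (f : VV Ω) :
    pd k (fun y => eW ϱ h y * f.1 y) =
      fun y => eW ϱ h y * ((h⁻¹ • (h • (vvD k : Module.End ℝ (VV Ω)) - ϱ k • (1 : Module.End ℝ (VV Ω)))) f).1 y := by
  funext x
  let L : EuclideanSpace ℝ (Fin n) →L[ℝ] ℝ := ∑ j, ϱ j • EuclideanSpace.proj (𝕜 := ℝ) j
  have hL : ∀ y, L y = ∑ j, ϱ j * y j := fun y => by simp [L]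
  have h0 : HasFDerivAt (fun y : EuclideanSpace ℝ (Fin n) => -(∑ j, ϱ j * y j) / h)
      ((-h⁻¹) • L) x := by
    convert ((-h⁻¹) • L).hasFDerivAt (x := x) using 1
    funext y
    simp [hL]; field_simp
  have h1 : HasFDerivAt (eW ϱ h) (Complex.ofRealCLM.comp
      (Real.exp (-(∑ j, ϱ j * x j) / h) • ((-h⁻¹) • L))) x :=
    Complex.ofRealCLM.hasFDerivAt.comp x h0.exp
  have h2 : L (EuclideanSpace.single k 1) = ϱ k := by rw [hL]; simp
  have h3 : HasFDerivAt (fun y => eW ϱ h y * f.1 y) _ x := h1.mul (vv_diff f x).hasFDerivAt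
  rw [pd, h3.fderiv]
  have e : ((h⁻¹ • (h • (vvD k : Module.End ℝ (VV Ω)) - ϱ k • (1 : Module.End ℝ (VV Ω)))) f).1 x
    = (h⁻¹ : ℝ) • ((h : ℝ) • fderiv ℝ f.1 x (EuclideanSpace.single k 1) - (ϱ k : ℝ) • f.1 x) := rfl
  rw [e]
  have hc : (h : ℂ) ≠ 0 := by exact_mod_cast hh
  simp [h2, eW]
  field_simp
  ring

lemma eW_iter (ϱ : Fin n → ℝ) (h : ℝ) (hh : h ≠ 0) (k : Fin n) (m : ℕ) (f : VV Ω) :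
    (pd k)^[m] (fun y => eW ϱ h y * f.1 y) =
      fun y => eW ϱ h y *
        (((h⁻¹ • (h • (vvD k : Module.End ℝ (VV Ω)) - ϱ k • (1 : Module.End ℝ (VV Ω)))) ^ m) f).1 y := by
  induction m with
  | zero => rfl
  | succ m ih =>
    rw [Function.iterate_succ_apply', ih, eW_pd ϱ h hh, pow_succ']
    rfl

end Conc

/-- estimate (1.2): semiclassical H¹ Carleman estimate for the
principal part with linear weight. -/
theorem carleman_principal_linear_weight
    (n : ℕ) (hn : 2 ≤ n)
    (Ω : Set (EuclideanSpace ℝ (Fin n))) (hΩopen : IsOpen Ω)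
    (hΩbdd : Bornology.IsBounded Ω)
    (ϱ : Fin n → ℝ) (hϱ : ϱ ≠ 0) :
    ∃ C > (0 : ℝ), ∃ h₀ : ℝ, 0 < h₀ ∧ h₀ < 1 ∧
      ∀ h : ℝ, 0 < h → h < h₀ →
        ∀ w : EuclideanSpace ℝ (Fin n) → ℂ, IsCcInfty Ω w →
          C * h * Real.sqrt (l2sq Ω w + h ^ 2 * gradsq Ω w) ≤
            l2norm Ω (fun x =>
              (Real.exp ((∑ j : Fin n, ϱ j * x j) / h) : ℂ) * (h : ℂ) ^ 4 *
                (∑ j : Fin n, (pd j)^[4]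
                  (fun y => (Real.exp (-(∑ j : Fin n, ϱ j * y j) / h) : ℂ) * w y) x)) := by

  obtain ⟨A, hA0, hA⟩ := hΩbdd.exists_pos_norm_le
  obtain ⟨C, hC, H⟩ := abs_final (V := VV Ω) vvD vvX A hA0 vv_adj vv_DD vv_DX vv_DX'
    (vv_XA hA0 hA) ϱ hϱ
  refine ⟨C, hC, 1 / 2, by norm_num, by norm_num, fun h hh _ w hw => ?_⟩
  have key := H h hh ⟨w, hw⟩
  rw [← vv_l2sq, ← vv_gradsq] at key
  refine key.trans (le_of_eq ?_)
  rw [l2norm, ← Real.sqrt_sq (norm_nonneg _), ← vv_l2sq]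
  congr 2
  funext x
  have hc : (h : ℂ) ≠ 0 := by exact_mod_cast hh.ne'
  have e := fun k => congrFun (eW_iter ϱ h hh.ne' k 4 (⟨w, hw⟩ : VV Ω)) x
  simp only [eW] at e
  simp only [e]
  rw [← Finset.mul_sum, ← mul_assoc]
  have e2 : ∀ k, (((h⁻¹ • (h • (vvD k : Module.End ℝ (VV Ω)) - ϱ k • (1 : Module.End ℝ (VV Ω)))) ^ 4) ⟨w, hw⟩).1 x
      = ((h : ℂ) ^ 4)⁻¹ * (((h • (vvD k : Module.End ℝ (VV Ω)) - ϱ k • (1 : Module.End ℝ (VV Ω))) ^ 4) ⟨w, hw⟩).1 x := by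
    intro k
    rw [smul_pow]
    change (h⁻¹ ^ 4 : ℝ) • (((h • (vvD k : Module.End ℝ (VV Ω)) - ϱ k • (1 : Module.End ℝ (VV Ω))) ^ 4) ⟨w, hw⟩).1 x = _
    simp
  simp only [e2]
  rw [← Finset.mul_sum]
  have e3 : (Real.exp ((∑ j : Fin n, ϱ j * x j) / h) : ℂ) *
      (Real.exp (-(∑ j : Fin n, ϱ j * x j) / h) : ℂ) = 1 := by
    rw [← Complex.ofReal_mul, ← Real.exp_add]
    simp [neg_div]
  have e4 : ((∑ k, (h • (vvD k : Module.End ℝ (VV Ω)) - ϱ k • (1 : Module.End ℝ (VV Ω))) ^ 4) ⟨w, hw⟩).1 x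
      = ∑ k, (((h • (vvD k : Module.End ℝ (VV Ω)) - ϱ k • (1 : Module.End ℝ (VV Ω))) ^ 4) ⟨w, hw⟩).1 x := by
    simp [LinearMap.sum_apply, Finset.sum_apply]
  rw [e4]
  rw [mul_right_comm _ ((h : ℂ) ^ 4), e3, one_mul, ← mul_assoc, mul_inv_cancel₀ (pow_ne_zero 4 hc),
    one_mul]
end
end
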